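/- Let γ be a real-analytic function on [-2,2]^{d-1} and m ∈ ℕ. For all positive constants c_m and c_{m+1}, the Lebesgue measure of the set {y ∈ [-1,1]^{d-1} : 𝔇^m γ(y) ≤ c_m and 𝔇^{m+1} γ(y) ≥ c_{m+1}} is at most a constant (depending only on m, d, and γ) times c_m / c_{m+1}. -/

import Mathlib

open MeasureTheory Set
open scoped ENNReal Topology

noncomputable section

/-- `𝔇^m γ(y)`: the (Euclidean) size of the array of all `m`-th order derivatives
of `γ` at `y`, realized as the norm of the `m`-th iterated derivative. -/
def Dm (n m : ℕ) (γ : EuclideanSpace ℝ (Fin n) → ℝ) (y : EuclideanSpace ℝ (Fin n)) : ℝ :=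
  ‖iteratedFDeriv ℝ m γ y‖

open scoped NNReal Filter

/-!
Near a point where a real analytic `g` is not locally constant, some derivative
`D^(k+1) g (v, …, v)` is nonzero there, and this remains true for all `v` in an open set, hence for
the vectors of some basis. On a line in such a direction `v`, Rolle's theorem splits the line into
at most `2 ^ k` intervals on which `g` is injective; on the part of each interval where `|g| ≤ a`
and `|∂_v g| ≥ b` the change of variables formula gives length at most `2 * a / b`. Fubini's theorem
along `v` turns this into a local estimate for `g` and `∂_v g`. Pigeonholing over the basis of
directions, and over coordinates of a vector-valued function, gives the estimate for `‖f‖` and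
`‖Df‖`, which is applied to `f = D^m γ` and summed over a finite cover of the compact set.
-/

section RealLine

lemma injOn_of_hasDerivAt_ne_zero {f f' : ℝ → ℝ} {I : Set ℝ} (hI : I.OrdConnected)
    (hf : ∀ t ∈ I, HasDerivAt f (f' t) t) (hf' : ∀ t ∈ I, f' t ≠ 0) : InjOn f I := by
  have ne_of_lt : ∀ x ∈ I, ∀ y ∈ I, x < y → f x ≠ f y := by
    intro x hx y hy hxy hfxy
    have hsub : Icc x y ⊆ I := hI.out hx hy
    obtain ⟨c, hc, hfc⟩ := exists_hasDerivAt_eq_zero hxy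
      (fun t ht => (hf t (hsub ht)).continuousAt.continuousWithinAt) hfxy
      (fun t ht => hf t (hsub (Ioo_subset_Icc_self ht)))
    exact hf' c (hsub (Ioo_subset_Icc_self hc)) hfc
  intro x hx y hy hxy
  by_contra hne
  rcases lt_or_gt_of_ne hne with hlt | hgt
  · exact ne_of_lt x hx y hy hlt hxy
  · exact ne_of_lt y hy x hx hgt hxy.symm

lemma volume_le_of_injOn_of_le_abs_deriv {f f' : ℝ → ℝ} {S : Set ℝ} (hS : MeasurableSet S)
    (hf : ∀ t ∈ S, HasDerivWithinAt f (f' t) S t) (hinj : InjOn f S) {a b : ℝ} (hb : 0 < b)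
    (hfa : ∀ t ∈ S, |f t| ≤ a) (hfb : ∀ t ∈ S, b ≤ |f' t|) :
    volume S ≤ 2 * ENNReal.ofReal (a / b) := by
  have hmul : volume S * ENNReal.ofReal b ≤ 2 * ENNReal.ofReal a := by
    calc volume S * ENNReal.ofReal b = ∫⁻ _ in S, ENNReal.ofReal b := by
          rw [setLIntegral_const, mul_comm]
      _ ≤ ∫⁻ t in S, ENNReal.ofReal |f' t| :=
          setLIntegral_mono' hS fun t ht => ENNReal.ofReal_le_ofReal (hfb t ht)
      _ = volume (f '' S) := by
          simpa using (lintegral_image_eq_lintegral_abs_deriv_mul hS hf hinj fun _ => 1).symm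
      _ ≤ volume (Icc (-a) a) :=
          measure_mono (image_subset_iff.2 fun t ht => abs_le.1 (hfa t ht))
      _ = 2 * ENNReal.ofReal a := by
          rw [Real.volume_Icc, sub_neg_eq_add, ← two_mul, ENNReal.ofReal_mul zero_le_two,
            ENNReal.ofReal_ofNat]
  rwa [ENNReal.ofReal_div_of_pos hb, ← mul_div_assoc,
    ENNReal.le_div_iff_mul_le (by simp [hb]) (by simp)]

lemma volume_le_of_hasDerivAt_chain {k : ℕ} {f : ℕ → ℝ → ℝ} {I S : Set ℝ} (hI : I.OrdConnected)
    (hS : MeasurableSet S) (hSI : S ⊆ I)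
    (hf : ∀ j ≤ k, ∀ t ∈ I, HasDerivAt (f j) (f (j + 1) t) t) (hk : ∀ t ∈ I, f (k + 1) t ≠ 0)
    {a b : ℝ} (hb : 0 < b) (hfa : ∀ t ∈ S, |f 0 t| ≤ a) (hfb : ∀ t ∈ S, b ≤ |f 1 t|) :
    volume S ≤ 2 ^ (k + 1) * ENNReal.ofReal (a / b) := by
  induction k generalizing I S with
  | zero =>
    simpa using volume_le_of_injOn_of_le_abs_deriv hS
      (fun t ht => (hf 0 le_rfl t (hSI ht)).hasDerivWithinAt)
      ((injOn_of_hasDerivAt_ne_zero hI (hf 0 le_rfl) hk).mono hSI) hb hfa hfb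
  | succ k ih =>
    obtain ⟨z, hz⟩ : ∃ z, ∀ t ∈ I, t ≠ z → f (k + 1) t ≠ 0 := by
      by_contra! hzeros
      obtain ⟨z, hzI, -, hz⟩ := hzeros 0
      obtain ⟨t, htI, htz, ht⟩ := hzeros z
      exact htz (injOn_of_hasDerivAt_ne_zero hI (hf (k + 1) le_rfl) hk htI hzI (ht.trans hz.symm))
    have piece : ∀ J : Set ℝ, J.OrdConnected → MeasurableSet J → z ∉ J →
        volume (S ∩ J) ≤ 2 ^ (k + 1) * ENNReal.ofReal (a / b) := fun J hJ hJm hzJ =>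
      ih (hI.inter hJ) (hS.inter hJm) (inter_subset_inter_left J hSI)
        (fun j hj t ht => hf j (hj.trans k.le_succ) t ht.1)
        (fun t ht => hz t ht.1 fun htz => hzJ (htz ▸ ht.2))
        (fun t ht => hfa t ht.1) (fun t ht => hfb t ht.1)
    calc volume S = volume (S \ {z}) := (measure_sdiff_null (Real.volume_singleton)).symm
      _ = volume (S ∩ Iio z ∪ S ∩ Ioi z) := by
          rw [← inter_union_distrib_left, Iio_union_Ioi, sdiff_eq]
      _ ≤ volume (S ∩ Iio z) + volume (S ∩ Ioi z) := measure_union_le _ _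
      _ ≤ 2 ^ (k + 1) * ENNReal.ofReal (a / b) + 2 ^ (k + 1) * ENNReal.ofReal (a / b) :=
          add_le_add (piece _ ordConnected_Iio measurableSet_Iio self_notMem_Iio)
            (piece _ ordConnected_Ioi measurableSet_Ioi self_notMem_Ioi)
      _ = 2 ^ (k + 2) * ENNReal.ofReal (a / b) := by ring

end RealLine

section SublevelBound

variable {α : Type*} [MeasurableSpace α] {μ : Measure α} {f f' g g' : α → ℝ} {l l' : Filter α}

/-- On some set of the filter `l`, the measure of `{f ≤ a, g ≥ b}` is `O(a / b)` uniformly in `a`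
and `b > 0`. With `l = 𝓟 S` this is the bound on `S`, with `l = 𝓝 x` the bound near `x`. -/
def SublevelBoundAtFilter (μ : Measure α) (f g : α → ℝ) (l : Filter α) : Prop :=
  ∃ C : ℝ≥0, ∃ U ∈ l, ∀ a b : ℝ, 0 < b →
    μ (U ∩ {x | f x ≤ a ∧ b ≤ g x}) ≤ C * ENNReal.ofReal (a / b)

namespace SublevelBoundAtFilter

lemma zero_right : SublevelBoundAtFilter μ f 0 l := by
  refine ⟨0, univ, Filter.univ_mem, fun a b hb => ?_⟩
  have hempty : {x | f x ≤ a ∧ b ≤ (0 : α → ℝ) x} = ∅ :=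
    eq_empty_of_forall_notMem fun x hx => hb.not_ge hx.2
  rw [hempty, inter_empty, measure_empty]
  exact zero_le

lemma filter_mono (h : SublevelBoundAtFilter μ f g l) (hl : l' ≤ l) :
    SublevelBoundAtFilter μ f g l' :=
  let ⟨C, U, hU, hC⟩ := h
  ⟨C, U, hl hU, hC⟩

lemma sup (h : SublevelBoundAtFilter μ f g l) (h' : SublevelBoundAtFilter μ f g l') :
    SublevelBoundAtFilter μ f g (l ⊔ l') := by
  obtain ⟨C, U, hU, hC⟩ := h
  obtain ⟨C', U', hU', hC'⟩ := h'
  refine ⟨C + C', U ∪ U', Filter.union_mem_sup hU hU', fun a b hb => ?_⟩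
  rw [union_inter_distrib_right, ENNReal.coe_add, add_mul]
  exact (measure_union_le _ _).trans (add_le_add (hC a b hb) (hC' a b hb))

lemma of_le_mul (h : SublevelBoundAtFilter μ f g l) {A B : ℝ≥0}
    (hf : ∀ᶠ x in l, f x ≤ A * f' x) (hg : ∀ᶠ x in l, g' x ≤ B * g x) :
    SublevelBoundAtFilter μ f' g' l := by
  obtain ⟨C, U, hU, hC⟩ := h
  refine ⟨C * (A * (B + 1)), _, Filter.inter_mem hU (hf.and hg), fun a b hb => ?_⟩
  have hsub : (U ∩ {x | f x ≤ A * f' x ∧ g' x ≤ B * g x}) ∩ {x | f' x ≤ a ∧ b ≤ g' x} ⊆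
      U ∩ {x | f x ≤ A * a ∧ b / (B + 1) ≤ g x} := by
    rintro x ⟨⟨hxU, hfx, hgx⟩, hxa, hxb⟩
    have hg_pos : 0 < g x := pos_of_mul_pos_right (hb.trans_le (hxb.trans hgx)) B.coe_nonneg
    refine ⟨hxU, hfx.trans (by gcongr), (div_le_iff₀ (by positivity)).2 ?_⟩
    linarith
  calc _ ≤ μ (U ∩ {x | f x ≤ A * a ∧ b / (B + 1) ≤ g x}) := measure_mono hsub
    _ ≤ C * ENNReal.ofReal (A * a / (b / (B + 1))) := hC _ _ (by positivity)
    _ = C * ENNReal.ofReal ((A * (B + 1) : ℝ≥0) * (a / b)) := by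
        congr 2
        push_cast
        field_simp
    _ = (C * (A * (B + 1)) : ℝ≥0) * ENNReal.ofReal (a / b) := by
        rw [ENNReal.ofReal_mul NNReal.zero_le_coe, ENNReal.ofReal_coe_nnreal, ENNReal.coe_mul C,
          mul_assoc]

lemma add_right (h : SublevelBoundAtFilter μ f g l) (h' : SublevelBoundAtFilter μ f g' l) :
    SublevelBoundAtFilter μ f (g + g') l := by
  obtain ⟨C, U, hU, hC⟩ := h
  obtain ⟨C', U', hU', hC'⟩ := h'
  refine ⟨(C + C') * 2, U ∩ U', Filter.inter_mem hU hU', fun a b hb => ?_⟩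
  have hsub : (U ∩ U') ∩ {x | f x ≤ a ∧ b ≤ (g + g') x} ⊆
      U ∩ {x | f x ≤ a ∧ b / 2 ≤ g x} ∪ U' ∩ {x | f x ≤ a ∧ b / 2 ≤ g' x} := by
    rintro x ⟨⟨hxU, hxU'⟩, hxa, hxb⟩
    rcases le_or_gt (b / 2) (g x) with hgx | hgx
    · exact Or.inl ⟨hxU, hxa, hgx⟩
    · exact Or.inr ⟨hxU', hxa, by linarith [show b ≤ g x + g' x from hxb]⟩
  calc _ ≤ _ := measure_mono hsub
    _ ≤ _ := measure_union_le _ _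
    _ ≤ C * ENNReal.ofReal (a / (b / 2)) + C' * ENNReal.ofReal (a / (b / 2)) :=
        add_le_add (hC _ _ (half_pos hb)) (hC' _ _ (half_pos hb))
    _ = ((C + C') * 2 : ℝ≥0) * ENNReal.ofReal (a / b) := by
        rw [div_div_eq_mul_div, mul_comm a, mul_div_assoc, ENNReal.ofReal_mul zero_le_two,
          ENNReal.ofReal_ofNat]
        push_cast
        ring

lemma sum_right {ι : Type*} {s : Finset ι} {g : ι → α → ℝ}
    (h : ∀ i ∈ s, SublevelBoundAtFilter μ f (g i) l) :
    SublevelBoundAtFilter μ f (∑ i ∈ s, g i) l :=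
  Finset.sum_induction g (SublevelBoundAtFilter μ f · l) (fun _ _ => add_right) zero_right h

lemma principal_of_isCompact [TopologicalSpace α] {K : Set α} (hK : IsCompact K)
    (h : ∀ x ∈ K, SublevelBoundAtFilter μ f g (𝓝 x)) : SublevelBoundAtFilter μ f g (𝓟 K) := by
  refine hK.induction_on (p := fun S => SublevelBoundAtFilter μ f g (𝓟 S)) ?_ ?_ ?_ ?_
  · exact ⟨0, ∅, by simp, by simp⟩
  · exact fun S T hST hT => hT.filter_mono (Filter.principal_mono.2 hST)
  · exact fun S T hS hT => Filter.sup_principal (s := S) (t := T) ▸ hS.sup hT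
  · intro x hx
    obtain ⟨C, U, hU, hC⟩ := h x hx
    exact ⟨U, mem_nhdsWithin_of_mem_nhds hU, C, U, Filter.mem_principal_self U, hC⟩

end SublevelBoundAtFilter

end SublevelBound

section FiniteDimensional

variable {E F : Type*} [NormedAddCommGroup E] [NormedSpace ℝ E] [NormedAddCommGroup F]
  [NormedSpace ℝ F] [FiniteDimensional ℝ F]

lemma exists_basis_forall_mem_of_isOpen {U : Set F} (hU : IsOpen U) (hne : U.Nonempty) :
    ∃ b : Module.Basis (Fin (Module.finrank ℝ F)) ℝ F, ∀ i, b i ∈ U := by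
  have hspan : Submodule.span ℝ U = ⊤ := Submodule.eq_top_of_nonempty_interior' _
    (hne.mono (interior_maximal Submodule.subset_span hU))
  let b := Module.Basis.ofSpan hspan.ge
  refine ⟨b.reindex (b.indexEquiv (Module.finBasis ℝ F)), fun i => ?_⟩
  rw [Module.Basis.reindex_apply]
  exact Module.Basis.ofSpan_subset hspan.ge (mem_range_self _)

lemma norm_le_sum_norm_mul_norm_coord_comp {ι : Type*} [Fintype ι]
    (b : Module.Basis ι ℝ F) (L : E →L[ℝ] F) :
    ‖L‖ ≤ ∑ i, ‖b i‖ * ‖(b.coord i).toContinuousLinearMap ∘L L‖ := by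
  refine L.opNorm_le_bound (by positivity) fun x => ?_
  calc ‖L x‖ = ‖∑ i, b.repr (L x) i • b i‖ := by rw [b.sum_repr]
    _ ≤ ∑ i, ‖b i‖ * ‖b.coord i (L x)‖ := by
        refine norm_sum_le_of_le _ fun i _ => ?_
        rw [norm_smul, mul_comm, b.coord_apply]
    _ ≤ (∑ i, ‖b i‖ * ‖(b.coord i).toContinuousLinearMap ∘L L‖) * ‖x‖ := by
        simp_rw [Finset.sum_mul, mul_assoc]
        gcongr with i
        exact ((b.coord i).toContinuousLinearMap ∘L L).le_opNorm x

lemma finiteDimensional_continuousMultilinearMap [FiniteDimensional ℝ E] {ι : Type*} [Finite ι] :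
    FiniteDimensional ℝ (ContinuousMultilinearMap ℝ (fun _ : ι => E) F) :=
  Module.Finite.of_injective (ContinuousMultilinearMap.toMultilinearMapLinear (R' := ℝ) (A := ℝ))
    ContinuousMultilinearMap.toMultilinearMap_injective

end FiniteDimensional

section Directional

variable {E : Type*} [NormedAddCommGroup E] [NormedSpace ℝ E]

lemma hasDerivAt_iteratedFDeriv_add_smul {F : Type*} [NormedAddCommGroup F] [NormedSpace ℝ F]
    {f : E → F} {x v : E} {t : ℝ} {k : ℕ}
    (hf : DifferentiableAt ℝ (iteratedFDeriv ℝ k f) (x + t • v)) :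
    HasDerivAt (fun s : ℝ => iteratedFDeriv ℝ k f (x + s • v) fun _ => v)
      (iteratedFDeriv ℝ (k + 1) f (x + t • v) fun _ => v) t := by
  have hline : HasDerivAt (fun s : ℝ => x + s • v) v t := by
    simpa using ((hasDerivAt_id t).smul_const v).const_add x
  rw [hf.iteratedFDeriv_succ_apply_left']
  exact (hf.continuousMultilinear_apply_const _).hasFDerivAt.comp_hasDerivAt t hline

variable [MeasurableSpace E] [BorelSpace E]

lemma volume_line_le_of_iteratedFDeriv_ne_zero {g : E → ℝ} {v : E} {k : ℕ} {D S : Set E}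
    (hD : Convex ℝ D) (hg : ∀ x ∈ D, ContDiffAt ℝ (k + 1) g x)
    (hk : ∀ x ∈ D, iteratedFDeriv ℝ (k + 1) g x (fun _ => v) ≠ 0) (hS : MeasurableSet S)
    (hSD : S ⊆ D) {a b : ℝ} (hb : 0 < b) (hga : ∀ x ∈ S, |g x| ≤ a)
    (hgb : ∀ x ∈ S, b ≤ |fderiv ℝ g x v|) (x : E) :
    volume {t : ℝ | x + t • v ∈ S} ≤ 2 ^ (k + 1) * ENNReal.ofReal (a / b) := by
  have hline : {t : ℝ | x + t • v ∈ D}.OrdConnected :=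
    ((hD.translate_preimage_right x).linear_preimage
      (LinearMap.toSpanSingleton ℝ E v)).ordConnected
  exact volume_le_of_hasDerivAt_chain
    (f := fun j t => iteratedFDeriv ℝ j g (x + t • v) fun _ => v) hline
    (hS.preimage (by fun_prop : Measurable fun t : ℝ => x + t • v)) (fun t ht => hSD ht)
    (fun j hj t ht => hasDerivAt_iteratedFDeriv_add_smul
      ((hg _ ht).differentiableAt_iteratedFDeriv (by exact_mod_cast Nat.lt_succ_of_le hj)))
    (fun t ht => hk _ ht) hb (fun t ht => by simpa using hga _ ht)
    (fun t ht => by simpa using hgb _ ht)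

variable {μ : Measure E}

lemma measure_le_mul_of_volume_line_le [SecondCountableTopology E] [SFinite μ]
    [μ.IsAddRightInvariant] {v : E} {S : Set E} (hS : MeasurableSet S) {M : ℝ≥0∞}
    (hM : ∀ x, volume {t : ℝ | x + t • v ∈ S} ≤ M) :
    μ S ≤ M * μ (Metric.cthickening ‖v‖ S) := by
  set B := Metric.cthickening ‖v‖ S
  have hSB : ∀ x, ∀ t ∈ Icc (0 : ℝ) 1, x + t • v ∈ S → x ∈ B := by
    intro x t ht hx
    refine Metric.mem_cthickening_of_dist_le x _ _ S hx ?_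
    rw [dist_self_add_right, norm_smul, Real.norm_of_nonneg ht.1]
    exact mul_le_of_le_one_left (norm_nonneg v) ht.2
  have hmeas : MeasurableSet {q : ℝ × E | q.2 + q.1 • v ∈ S} :=
    hS.preimage (by fun_prop : Measurable fun q : ℝ × E => q.2 + q.1 • v)
  calc μ S = ∫⁻ _ in Icc (0 : ℝ) 1, μ S := by simp
    _ = ∫⁻ t in Icc (0 : ℝ) 1, μ {x | x + t • v ∈ S} :=
        lintegral_congr fun t => (measure_preimage_add_right μ (t • v) S).symm
    _ = ∫⁻ x, volume.restrict (Icc 0 1) {t : ℝ | x + t • v ∈ S} ∂μ :=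
        (Measure.prod_apply hmeas).symm.trans (Measure.prod_apply_symm hmeas)
    _ ≤ ∫⁻ x, B.indicator (fun _ => M) x ∂μ := by
        refine lintegral_mono fun x => ?_
        by_cases hx : x ∈ B
        · rw [indicator_of_mem hx]
          exact (Measure.restrict_apply_le _ _).trans (hM x)
        · have hdisj : {t : ℝ | x + t • v ∈ S} ∩ Icc 0 1 = ∅ :=
            eq_empty_of_forall_notMem fun t ht => hx (hSB x t ht.2 ht.1)
          rw [indicator_of_notMem hx, Measure.restrict_apply' measurableSet_Icc, hdisj,
            measure_empty]
    _ ≤ M * μ B := lintegral_indicator_const_le _ _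

variable [FiniteDimensional ℝ E] [μ.IsAddHaarMeasure] {g : E → ℝ} {p : E}

lemma sublevelBoundAtFilter_fderiv_apply {v : E} {k : ℕ} (hg : ContDiffAt ℝ (k + 1) g p)
    (hk : iteratedFDeriv ℝ (k + 1) g p (fun _ => v) ≠ 0) :
    SublevelBoundAtFilter μ (fun x => |g x|) (fun x => |fderiv ℝ g x v|) (𝓝 p) := by
  have hne : ∀ᶠ x in 𝓝 p, iteratedFDeriv ℝ (k + 1) g x (fun _ => v) ≠ 0 :=
    ((continuous_eval_const _).continuousAt.comp
      (hg.continuousAt_iteratedFDeriv le_rfl)).eventually_ne hk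
  obtain ⟨r, hr, hball⟩ := Metric.nhds_basis_closedBall.eventually_iff.1
    ((hg.eventually (by simp)).and hne)
  set D := Metric.closedBall p r
  set V := Metric.cthickening ‖v‖ D
  have hV : μ V ≠ ⊤ := Metric.isBounded_closedBall.cthickening.measure_lt_top.ne
  refine ⟨2 ^ (k + 1) * (μ V).toNNReal, D, Metric.closedBall_mem_nhds p hr, fun a b hb => ?_⟩
  have hS : MeasurableSet (D ∩ {x | |g x| ≤ a ∧ b ≤ |fderiv ℝ g x v|}) := by
    have hcont : ContinuousOn (fun x => |g x|) D := fun x hx =>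
      (hball hx).1.continuousAt.abs.continuousWithinAt
    rw [ofPred_and, ← inter_assoc]
    exact (Metric.isClosed_closedBall.isClosed_le hcont continuousOn_const).measurableSet.inter
      (measurableSet_le measurable_const (measurable_fderiv_apply_const ℝ g v).abs)
  have hline := volume_line_le_of_iteratedFDeriv_ne_zero (convex_closedBall p r)
    (fun x hx => (hball hx).1) (fun x hx => (hball hx).2) hS inter_subset_left hb
    (fun x hx => hx.2.1) (fun x hx => hx.2.2)
  calc _ ≤ 2 ^ (k + 1) * ENNReal.ofReal (a / b) * μ V :=
        (measure_le_mul_of_volume_line_le hS hline).trans (mul_le_mul_right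
          (measure_mono (Metric.cthickening_subset_of_subset _ inter_subset_left)) _)
    _ = (2 ^ (k + 1) * (μ V).toNNReal : ℝ≥0) * ENNReal.ofReal (a / b) := by
        rw [ENNReal.coe_mul, ENNReal.coe_toNNReal hV, mul_right_comm]
        norm_cast

lemma sublevelBoundAtFilter_norm_fderiv_of_iteratedFDeriv_ne_zero {v : E} {k : ℕ}
    (hg : ContDiffAt ℝ (k + 1) g p) (hk : iteratedFDeriv ℝ (k + 1) g p (fun _ => v) ≠ 0) :
    SublevelBoundAtFilter μ (fun x => |g x|) (fun x => ‖fderiv ℝ g x‖) (𝓝 p) := by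
  have hopen : IsOpen {w : E | iteratedFDeriv ℝ (k + 1) g p (fun _ => w) ≠ 0} :=
    isOpen_ne_fun (by fun_prop) continuous_const
  obtain ⟨b, hb⟩ := exists_basis_forall_mem_of_isOpen hopen ⟨v, hk⟩
  obtain ⟨C, hC, hbound⟩ := b.exists_opNorm_le (F := ℝ)
  have hsum : SublevelBoundAtFilter μ (fun x => |g x|) (∑ i, fun x => |fderiv ℝ g x (b i)|) (𝓝 p) :=
    .sum_right fun i _ => sublevelBoundAtFilter_fderiv_apply hg (hb i)
  refine hsum.of_le_mul (A := 1) (B := ⟨C, hC.le⟩) (by simp) (.of_forall fun x => ?_)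
  rw [Finset.sum_apply]
  exact hbound (by positivity) fun i =>
    Finset.single_le_sum (f := fun i => |fderiv ℝ g x (b i)|) (fun _ _ => abs_nonneg _)
      (Finset.mem_univ i)

end Directional

section Analytic

variable {E F : Type*} [NormedAddCommGroup E] [NormedSpace ℝ E] [NormedAddCommGroup F]
  [NormedSpace ℝ F]

lemma eventuallyEq_const_or_exists_iteratedFDeriv_ne_zero [CompleteSpace F] {f : E → F} {p : E}
    (hf : AnalyticAt ℝ f p) : (f =ᶠ[𝓝 p] fun _ => f p) ∨
      ∃ (k : ℕ) (v : E), iteratedFDeriv ℝ (k + 1) f p (fun _ => v) ≠ 0 := by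
  by_contra! ⟨hconst, hzero⟩
  obtain ⟨q, r, hq⟩ := hf
  refine hconst ?_
  filter_upwards [Metric.eball_mem_nhds p hq.r_pos] with x hx
  have htaylor := hq.hasSum_iteratedFDeriv (y := x - p) (by simpa [edist_eq_enorm_sub] using hx)
  have hsingle := hasSum_single (f := fun n : ℕ =>
    ((n.factorial : ℝ)⁻¹ • iteratedFDeriv ℝ n f p fun _ => x - p)) 0 (by
      rintro (_ | k) hk
      · exact absurd rfl hk
      · simp [hzero])
  simpa using htaylor.unique hsingle

variable [FiniteDimensional ℝ E] [MeasurableSpace E] [BorelSpace E] {μ : Measure E}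
  [μ.IsAddHaarMeasure]

lemma sublevelBoundAtFilter_norm_fderiv_real {g : E → ℝ} {p : E} (hg : AnalyticAt ℝ g p) :
    SublevelBoundAtFilter μ (fun x => |g x|) (fun x => ‖fderiv ℝ g x‖) (𝓝 p) := by
  rcases eventuallyEq_const_or_exists_iteratedFDeriv_ne_zero hg with hconst | ⟨k, v, hk⟩
  · refine SublevelBoundAtFilter.zero_right.of_le_mul (A := 1) (B := 0)
      (.of_forall fun x => (one_mul _).ge) ?_
    filter_upwards [hconst.fderiv (𝕜 := ℝ)] with x hx
    simp [hx]
  · exact sublevelBoundAtFilter_norm_fderiv_of_iteratedFDeriv_ne_zero hg.contDiffAt hk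

lemma sublevelBoundAtFilter_norm_fderiv [FiniteDimensional ℝ F] {f : E → F} {p : E}
    (hf : AnalyticAt ℝ f p) :
    SublevelBoundAtFilter μ (fun x => ‖f x‖) (fun x => ‖fderiv ℝ f x‖) (𝓝 p) := by
  let b := Module.finBasis ℝ F
  let φ := fun i => (b.coord i).toContinuousLinearMap
  have hcoord : ∀ i, SublevelBoundAtFilter μ (fun x => ‖f x‖)
      (fun x => ‖b i‖ * ‖fderiv ℝ (φ i ∘ f) x‖) (𝓝 p) := fun i =>
    (sublevelBoundAtFilter_norm_fderiv_real (((φ i).analyticAt _).comp hf)).of_le_mul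
      (A := ‖φ i‖₊) (B := ‖b i‖₊) (.of_forall fun x => (φ i).le_opNorm (f x))
      (.of_forall fun x => le_rfl)
  refine (SublevelBoundAtFilter.sum_right fun i (_ : i ∈ Finset.univ) => hcoord i).of_le_mul
    (A := 1) (B := 1) (by simp) ?_
  filter_upwards [hf.eventually_analyticAt] with x hx
  have hfderiv : ∀ i, fderiv ℝ (φ i ∘ f) x = φ i ∘L fderiv ℝ f x := fun i =>
    ((φ i).hasFDerivAt.comp x hx.differentiableAt.hasFDerivAt).fderiv
  simpa [hfderiv] using norm_le_sum_norm_mul_norm_coord_comp b (fderiv ℝ f x)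

variable (μ) in
theorem sublevel_derivative_measure_bound_general [FiniteDimensional ℝ F] {K : Set E}
    (hK : IsCompact K) {f : E → F} (hf : AnalyticOnNhd ℝ f K) (m : ℕ) :
    ∃ C > 0, ∀ a b : ℝ, 0 < b →
      μ (K ∩ {x | ‖iteratedFDeriv ℝ m f x‖ ≤ a ∧ b ≤ ‖iteratedFDeriv ℝ (m + 1) f x‖}) ≤
        ENNReal.ofReal (C * a / b) := by
  have := FiniteDimensional.complete ℝ F
  have := finiteDimensional_continuousMultilinearMap (E := E) (F := F) (ι := Fin m)
  obtain ⟨C, U, hKU, hC⟩ := SublevelBoundAtFilter.principal_of_isCompact (μ := μ) hK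
    fun p hp => sublevelBoundAtFilter_norm_fderiv (hf.iteratedFDeriv m p hp)
  refine ⟨C + 1, by positivity, fun a b hb => ?_⟩
  simp_rw [← norm_fderiv_iteratedFDeriv]
  calc _ ≤ C * ENNReal.ofReal (a / b) :=
        (measure_mono (inter_subset_inter_left _ hKU)).trans (hC a b hb)
    _ ≤ ENNReal.ofReal (C + 1) * ENNReal.ofReal (a / b) := by
        gcongr
        exact ENNReal.coe_nnreal_eq C ▸ ENNReal.ofReal_le_ofReal (by simp)
    _ = ENNReal.ofReal ((C + 1) * a / b) := by
        rw [← ENNReal.ofReal_mul (by positivity), mul_div_assoc]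

end Analytic

lemma isCompact_setOf_forall_abs_le {ι : Type*} [Finite ι] (r : ℝ) :
    IsCompact {y : EuclideanSpace ℝ ι | ∀ i, |y i| ≤ r} := by
  have hcube : {y : EuclideanSpace ℝ ι | ∀ i, |y i| ≤ r} =
      EuclideanSpace.equiv ι ℝ ⁻¹' Icc (fun _ => -r) (fun _ => r) := by
    ext y
    simp only [abs_le, mem_ofPred_eq, forall_and]
    rfl
  rw [hcube]
  exact (EuclideanSpace.equiv ι ℝ).toHomeomorph.isCompact_preimage.2 isCompact_Icc

/-- Let `γ` be real-analytic on `[-2,2]^{d-1}` and `m ∈ ℕ`. For all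
positive constants `c_m`, `c_{m+1}`, the Lebesgue measure of
`{y ∈ [-1,1]^{d-1} : 𝔇^m γ(y) ≤ c_m, 𝔇^{m+1} γ(y) ≥ c_{m+1}}` is at most a constant
(depending only on `m`, `d` and `γ`) times `c_m / c_{m+1}`. -/
theorem sublevel_derivative_measure_bound
    (n m : ℕ) (γ : EuclideanSpace ℝ (Fin n) → ℝ)
    (hγ : AnalyticOnNhd ℝ γ {y : EuclideanSpace ℝ (Fin n) | ∀ i, |y i| ≤ 2}) :
    ∃ C > 0, ∀ cm cm1 : ℝ, 0 < cm → 0 < cm1 →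
      volume {y : EuclideanSpace ℝ (Fin n) |
          (∀ i, |y i| ≤ 1) ∧ Dm n m γ y ≤ cm ∧ cm1 ≤ Dm n (m + 1) γ y} ≤
        ENNReal.ofReal (C * cm / cm1) := by
  obtain ⟨C, hC, hbound⟩ := sublevel_derivative_measure_bound_general volume
    (isCompact_setOf_forall_abs_le 1) (hγ.mono fun _ hy i => (hy i).trans one_le_two) m
  exact ⟨C, hC, fun cm cm1 _ hcm1 => hbound cm cm1 hcm1⟩
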